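/- Let α₀, β₀, z, m ∈ ℝ with α₀ ≠ 0, and let B = blockdiag(B(α₀,β₀), B(α₀,β₀)) (a 6×6 matrix). Let ℒ be the 6×6 real matrix with rows (1,0,0,0,0,0), (z,1,0,0,0,0), (z²/2, z, 1, m, 0, 0), (0,0,0,1,0,0), (0,0,0,z,1,0), (−m, 0, 0, z²/2, z, 1). Then ℒ is invertible and ℒᵀ B ℒ = B; equivalently, ℒ is a (B, B)-unitary operator: it is bijective and ⟨Bℒx, ℒy⟩ = ⟨Bx, y⟩ for all x, y ∈ ℂ⁶. -/

import Mathlib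

open Matrix

/-- The standard Hermitian inner product on `ℂ^n`, conjugate-linear in the
second argument. -/
noncomputable def herm {n : Type*} [Fintype n] (x y : n → ℂ) : ℂ :=
  ∑ i, x i * (starRingEnd ℂ) (y i)

/-- `B(α,β)`: the 3×3 matrix with rows `(β,0,α)`, `(0,−α,0)`, `(α,0,0)`, viewed over `ℂ`. -/
noncomputable def Bmat (a b : ℝ) : Matrix (Fin 3) (Fin 3) ℂ :=
  !![(b : ℂ), 0, (a : ℂ); 0, -(a : ℂ), 0; (a : ℂ), 0, 0]

/-- `blockdiag(B(α,β), B(α,β))` as a 6×6 matrix over `ℂ`. -/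
noncomputable def B6 (a b : ℝ) : Matrix (Fin 6) (Fin 6) ℂ :=
  !![(b : ℂ), 0, (a : ℂ), 0, 0, 0;
     0, -(a : ℂ), 0, 0, 0, 0;
     (a : ℂ), 0, 0, 0, 0, 0;
     0, 0, 0, (b : ℂ), 0, (a : ℂ);
     0, 0, 0, 0, -(a : ℂ), 0;
     0, 0, 0, (a : ℂ), 0, 0]

/-!
Under `Fin 3 ⊕ Fin 3 ≃ Fin 6` the form is `B ⊕ B` and `ℒ` is the block matrix `(E, F; -F, E)`, where
`E = exp (z N)` for the subdiagonal shift `N`, and `F = m e₃ e₁ᵀ`. Since `N` is skew for `B`, `E`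
preserves `B`. The range of `F` is spanned by the `B`-isotropic vector `e₃`, and
`Eᵀ B F = a m e₁ e₁ᵀ` is symmetric; hence the block matrix preserves `B ⊕ B`. As `a ≠ 0`, this
form is nondegenerate, so its isometries are invertible.
-/

section Hermitian

variable {m n : Type*} [Fintype m] [Fintype n]

lemma herm_mulVec_right (M : Matrix m n ℂ) (x : m → ℂ) (y : n → ℂ) :
    herm x (M *ᵥ y) = herm (Mᴴ *ᵥ x) y := by
  change x ⬝ᵥ star (M *ᵥ y) = (Mᴴ *ᵥ x) ⬝ᵥ star y
  rw [star_mulVec, dotProduct_comm, ← dotProduct_mulVec, dotProduct_comm]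

lemma herm_mulVec_mulVec_of_conjTranspose_mul_mul {U : Matrix m n ℂ} {A : Matrix m m ℂ}
    {B : Matrix n n ℂ} (h : Uᴴ * A * U = B) (x y : n → ℂ) :
    herm (A *ᵥ (U *ᵥ x)) (U *ᵥ y) = herm (B *ᵥ x) y := by
  rw [herm_mulVec_right, mulVec_mulVec, mulVec_mulVec, h]

end Hermitian

section Isometry

variable {n R : Type*} [Fintype n]

lemma isUnit_of_transpose_mul_mul_eq [DecidableEq n] [CommRing R] {U B : Matrix n n R}
    (hB : IsUnit B) (h : Uᵀ * B * U = B) : IsUnit U :=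
  isUnit_of_mul_isUnit_right (h.symm ▸ hB : IsUnit (Uᵀ * B * U))

lemma fromBlocks_transpose_mul_mul_eq [NonUnitalRing R] {B E F : Matrix n n R}
    (hE : Eᵀ * B * E = B) (hF : Fᵀ * B * F = 0) (hEF : Eᵀ * B * F = Fᵀ * B * E) :
    (fromBlocks E F (-F) E)ᵀ * fromBlocks B 0 0 B * fromBlocks E F (-F) E =
      fromBlocks B 0 0 B := by
  simp [fromBlocks_transpose, fromBlocks_multiply, hE, hF, hEF]

end Isometry

lemma Bmat_transpose (a b : ℝ) : (Bmat a b)ᵀ = Bmat a b := by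
  ext i j
  fin_cases i <;> fin_cases j <;> rfl

lemma det_Bmat (a b : ℝ) : (Bmat a b).det = (a : ℂ) ^ 3 := by
  simp [Bmat, det_fin_three, pow_three']

lemma Bmat_mul_single (a b : ℝ) (m : ℂ) :
    Bmat a b * single 2 0 m = single 0 0 (a * m) := by
  ext i j
  fin_cases i <;> fin_cases j <;> simp [Bmat, mul_apply, single_apply]

lemma B6_eq_reindex (a b : ℝ) :
    B6 a b = reindex finSumFinEquiv finSumFinEquiv
      (fromBlocks (Bmat a b) 0 0 (Bmat a b)) := by
  ext i j
  fin_cases i <;> fin_cases j <;> rfl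

lemma isUnit_B6 {a : ℝ} (ha : a ≠ 0) (b : ℝ) : IsUnit (B6 a b) := by
  rw [B6_eq_reindex, isUnit_iff_isUnit_det, det_reindex_self, det_fromBlocks_zero₂₁, det_Bmat]
  simp [ha]

/-- The exponential `exp (z N)` of the subdiagonal shift `N` on `ℂ³`, written out as `N ^ 3 = 0`.
Acting on boundary values `(u, u', u'')`, it is the δ-interaction of strength `z` at a vertex
joining two half-lines. -/
noncomputable def expShift (z : ℂ) : Matrix (Fin 3) (Fin 3) ℂ :=
  !![1, 0, 0; z, 1, 0; z ^ 2 / 2, z, 1]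

lemma expShift_neg_mul_self (z : ℂ) : expShift (-z) * expShift z = 1 := by
  ext i j
  fin_cases i <;> fin_cases j <;> simp [expShift, mul_apply, Fin.sum_univ_three]
  ring

lemma expShift_transpose_mul_Bmat (a b : ℝ) (z : ℂ) :
    (expShift z)ᵀ * Bmat a b = Bmat a b * expShift (-z) := by
  ext i j
  fin_cases i <;> fin_cases j <;>
    simp [expShift, Bmat, mul_apply, Fin.sum_univ_three] <;> ring

lemma expShift_transpose_mul_Bmat_mul (a b : ℝ) (z : ℂ) :
    (expShift z)ᵀ * Bmat a b * expShift z = Bmat a b := by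
  rw [expShift_transpose_mul_Bmat, Matrix.mul_assoc, expShift_neg_mul_self, Matrix.mul_one]

lemma expShift_transpose_mul_single (z c : ℂ) :
    (expShift z)ᵀ * single 0 0 c = single 0 0 c := by
  ext i j
  fin_cases i <;> fin_cases j <;> simp [expShift, mul_apply, single_apply]

lemma expShift_conjTranspose (z : ℝ) : (expShift z)ᴴ = (expShift z)ᵀ := by
  ext i j
  fin_cases i <;> fin_cases j <;> simp [expShift]

/-- The matrix `ℒ` of the δ-interaction on the looping-edge graph, in `3 × 3` blocks: the strength
`z` acts within each block of boundary values, and `m` couples the two blocks. -/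
noncomputable def deltaInteraction (z m : ℂ) : Matrix (Fin 3 ⊕ Fin 3) (Fin 3 ⊕ Fin 3) ℂ :=
  fromBlocks (expShift z) (single 2 0 m) (-single 2 0 m) (expShift z)

lemma deltaInteraction_conjTranspose (z m : ℝ) :
    (deltaInteraction z m)ᴴ = (deltaInteraction z m)ᵀ := by
  simp [deltaInteraction, fromBlocks_conjTranspose, fromBlocks_transpose,
    expShift_conjTranspose, conjTranspose_single, transpose_single]

lemma deltaInteraction_transpose_mul_mul (a b : ℝ) (z m : ℂ) :
    (deltaInteraction z m)ᵀ * fromBlocks (Bmat a b) 0 0 (Bmat a b) * deltaInteraction z m =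
      fromBlocks (Bmat a b) 0 0 (Bmat a b) := by
  set F : Matrix (Fin 3) (Fin 3) ℂ := single 2 0 m with hF
  have isotropic : Fᵀ * Bmat a b * F = 0 := by
    rw [Matrix.mul_assoc, hF, Bmat_mul_single, transpose_single]
    exact single_mul_single_of_ne _ _ _ _ (by decide) _
  have cross : (expShift z)ᵀ * Bmat a b * F = single 0 0 (a * m) := by
    rw [Matrix.mul_assoc, hF, Bmat_mul_single, expShift_transpose_mul_single]
  have cross_transpose : Fᵀ * Bmat a b * expShift z = single 0 0 (a * m) := by
    simpa only [transpose_mul, transpose_transpose, Bmat_transpose, transpose_single,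
      Matrix.mul_assoc] using congrArg transpose cross
  exact fromBlocks_transpose_mul_mul_eq (expShift_transpose_mul_Bmat_mul a b z)
    isotropic (cross.trans cross_transpose.symm)

lemma reindex_deltaInteraction (z m : ℂ) :
    reindex finSumFinEquiv finSumFinEquiv (deltaInteraction z m) =
      !![1, 0, 0, 0, 0, 0;
         z, 1, 0, 0, 0, 0;
         z ^ 2 / 2, z, 1, m, 0, 0;
         0, 0, 0, 1, 0, 0;
         0, 0, 0, z, 1, 0;
         -m, 0, 0, z ^ 2 / 2, z, 1] := by
  ext i j
  fin_cases i <;> fin_cases j <;>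
    simp [deltaInteraction, expShift, finSumFinEquiv, Fin.addCases]

/-- Example 4.8: the matrix `ℒ` of δ-type interactions for the Airy operator on a
looping-edge graph with two half-lines is a `(B,B)`-unitary operator. -/
theorem delta_interaction_unitary (a b z m : ℝ) (ha : a ≠ 0)
    (ℒ : Matrix (Fin 6) (Fin 6) ℂ)
    (hℒ : ℒ = !![1, 0, 0, 0, 0, 0;
                 (z : ℂ), 1, 0, 0, 0, 0;
                 (z : ℂ) ^ 2 / 2, (z : ℂ), 1, (m : ℂ), 0, 0;
                 0, 0, 0, 1, 0, 0;
                 0, 0, 0, (z : ℂ), 1, 0;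
                 -(m : ℂ), 0, 0, (z : ℂ) ^ 2 / 2, (z : ℂ), 1]) :
    IsUnit ℒ ∧ ℒᵀ * B6 a b * ℒ = B6 a b ∧
      Function.Bijective ℒ.mulVec ∧
      ∀ x y : Fin 6 → ℂ,
        herm ((B6 a b).mulVec (ℒ.mulVec x)) (ℒ.mulVec y)
          = herm ((B6 a b).mulVec x) y := by
  rw [← reindex_deltaInteraction] at hℒ
  have hconj : ℒᴴ = ℒᵀ := by
    rw [hℒ, conjTranspose_reindex, transpose_reindex, deltaInteraction_conjTranspose]
  have hisom : ℒᵀ * B6 a b * ℒ = B6 a b := by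
    simp only [hℒ, B6_eq_reindex, reindex_apply, transpose_submatrix, submatrix_mul_equiv,
      deltaInteraction_transpose_mul_mul]
  have hunit : IsUnit ℒ := isUnit_of_transpose_mul_mul_eq (isUnit_B6 ha b) hisom
  exact ⟨hunit, hisom,
    ⟨mulVec_injective_iff_isUnit.2 hunit, mulVec_surjective_iff_isUnit.2 hunit⟩,
    herm_mulVec_mulVec_of_conjTranspose_mul_mul (hconj ▸ hisom)⟩
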